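/- arXiv:2204.08823 — 2 statements merged into one kernel-verified Lean document; each statement's English description precedes it below -/
import Mathlib

section
/- For every real polynomial p of degree at most 5, every x ∈ ℝ and every h ∈ ℝ with h ≠ 0, the full-stencil Hermite derivative formula is exact: p'(x + h/2) = (1/h)·((3/64)p(x-h) - (3/2)p(x) + (93/64)p(x+h)) + (1/64)·(p'(x-h) - 12·p'(x) - 15·p'(x+h)). -/
theorem hermite_full_stencil_derivative_exact
    (p : Polynomial ℝ) (hp : p.degree ≤ 5) (x h : ℝ) (hh : h ≠ 0) :
    p.derivative.eval (x + h / 2) =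
      (1 / h) * ((3/64) * p.eval (x - h) - (3/2) * p.eval x + (93/64) * p.eval (x + h))
        + (1/64) * (p.derivative.eval (x - h) - 12 * p.derivative.eval x
            - 15 * p.derivative.eval (x + h)) := by
  have hn : p.natDegree < 6 :=
    Nat.lt_succ_of_le (Polynomial.natDegree_le_of_degree_le hp)
  have hs := p.as_sum_range_C_mul_X_pow' hn
  simp only [Finset.sum_range_succ, Finset.sum_range_zero] at hs
  generalize p.coeff 0 = a0 at hs
  generalize p.coeff 1 = a1 at hs
  generalize p.coeff 2 = a2 at hs
  generalize p.coeff 3 = a3 at hs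
  generalize p.coeff 4 = a4 at hs
  generalize p.coeff 5 = a5 at hs
  subst hs
  simp
  field_simp
  ring
end

section
/- For every real polynomial p of degree at most 5, every x ∈ ℝ and every h ∈ ℝ with h ≠ 0, defining the sliding cell average A(a) = (1/h)·∫_{x+a-h/2}^{x+a+h/2} p(t) dt, the five-point flux reconstruction is exact: (3/640)·A(-2h) - (29/480)·A(-h) + (1067/960)·A(0) - (29/480)·A(h) + (3/640)·A(2h) = p(x). -/
theorem flux_reconstruction_exact_on_quintics
    (p : Polynomial ℝ) (hp : p.degree ≤ 5) (x h : ℝ) (hh : h ≠ 0) :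
    (let A : ℝ → ℝ := fun a => (1 / h) * ∫ t in (x + a - h / 2)..(x + a + h / 2), p.eval t
     (3/640) * A (-2 * h) - (29/480) * A (-h) + (1067/960) * A 0
       - (29/480) * A h + (3/640) * A (2 * h)) = p.eval x := by
  have hn : p.natDegree < 6 := by
    have := Polynomial.natDegree_le_of_degree_le (n := 5) hp
    omega
  have he : ∀ t, p.eval t = p.coeff 0 + p.coeff 1 * t + p.coeff 2 * t^2 + p.coeff 3 * t^3
      + p.coeff 4 * t^4 + p.coeff 5 * t^5 := by
    intro t
    rw [Polynomial.eval_eq_sum_range' hn]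
    simp [Finset.sum_range_succ]
  have hI : ∀ a b : ℝ, ∫ t in a..b, p.eval t =
      ∑ i ∈ Finset.range 6, p.coeff i * ((b^(i+1) - a^(i+1)) / (i+1)) := by
    intro a b
    simp_rw [Polynomial.eval_eq_sum_range' hn]
    rw [intervalIntegral.integral_finsetSum]
    · simp [integral_pow]
    · intro i _
      exact Continuous.intervalIntegrable (by fun_prop) _ _
  simp only [hI, he x, Finset.sum_range_succ, Finset.sum_range_zero]
  push_cast
  field_simp
  ring
end
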